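/- For every integer k ≥ 2 and every input list L, First Fit with cardinality constraint k satisfies FF(L) ≤ (2.7 − 2.4/k)·OPT(L). That is, the absolute competitive ratio of First Fit is at most 2.7 − 2.4/k. -/

import Mathlib

/-!
Call a First Fit bin *full* if it ends up with `k` items. Every item fails to fit, by size alone and
with respect to the final loads, in each earlier bin that is not full. So the `N` bins that are not
full form an ordinary First Fit packing (without cardinality constraint) of the `n` items in them.
With `Z = OPT` and `K` full bins, `k * K + n ≤ k * Z`.

The bulk of the proof concerns this ordinary packing, compared with the optimal bins (`FFPair`):

* `FFPair.two_mul_card_bins_le`: `2 * N ≤ n + Z`, since at most `Z` bins contain a single item;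
* `FFPair.dichotomy`: `10 * N ≤ 17 * Z`, or `10 * N = 17 * Z + 1` and `8 * Z ≤ 3 * n`.

These imply the theorem by arithmetic (`final_arith`).

The dichotomy is proved with weights. An item of size `a` has weight `6 * a` plus a bonus: `2 - 3 * y`
for an item alone in its First Fit bin (*single*), and `bonus y a` for any other item. Here
`0 ≤ y ≤ 1/6` is chosen from the load of the last bin with at least two items (*common* bin); `y = 0`
is the usual choice in the analysis of First Fit. An optimal bin has weight at most `8.5 - 6 * y`, up
to a correction for one exceptionally small single item, and less if it has no single item
(`FFPair.weight_le`). Conversely the bonus of a common bin pays for the missing load of the preceding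
one, so that on average a First Fit bin has weight `5 - 3 * y`, up to a deficit of at most `1 + 3 * y`
for the last common bin (`FFPair.chain_good`, `FFPair.chain_plain`, `FFPair.singles_surplus`).
Together these give `FFPair.weighted_bound`, which after rounding leaves only `10 * N = 17 * Z + 1` with
exactly `Z` single items. In that case `Z = 7` or `Z ≥ 17`. For `Z = 7` the unused bonus of the first
common bin shows that some bin has four items. For `Z ≥ 17` every optimal bin contains a single item
and thus has little room for further items of size at least `1/4`, while a common bin without such
items, apart from one, has at least four items (`FFPair.many_items`). If there are too few single
items for the weights to work, comparing total sizes is enough (`FFPair.bound_of_no_singles`,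
`FFPair.bound_of_small_single`).
-/

open scoped Classical
noncomputable section

/-- An input is a list of item sizes, each in (0,1]. -/
def ValidInput (L : List ℝ) : Prop := ∀ x ∈ L, 0 < x ∧ x ≤ 1

/-- A packing assigns a bin index to each item; it is feasible for cardinality
constraint `k` if every bin receives at most `k` items of total size at most 1. -/
def IsFeasible (k : ℕ) (L : List ℝ) (f : Fin L.length → ℕ) : Prop :=
  ∀ b : ℕ,
    (Finset.univ.filter (fun i => f i = b)).card ≤ k ∧
    ∑ i ∈ Finset.univ.filter (fun i => f i = b), L.get i ≤ 1

/-- The number of bins used by a packing. -/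
def binsUsed (L : List ℝ) (f : Fin L.length → ℕ) : ℕ :=
  (Finset.univ.image f).card

/-- The optimal (minimum) number of bins in a feasible packing of `L`. -/
def OPT (k : ℕ) (L : List ℝ) : ℕ :=
  sInf {n | ∃ f : Fin L.length → ℕ, IsFeasible k L f ∧ binsUsed L f = n}

/-- A deterministic online algorithm is a strategy: given the items seen so far
(ending with the item to be packed), it returns the bin index for that item. -/
def onlinePacking (A : List ℝ → ℕ) (L : List ℝ) : Fin L.length → ℕ :=
  fun i => A (L.take (i.1 + 1))

/-- The strategy `A` is a valid online algorithm for cardinality constraint `k`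
if on every valid input the induced packing is feasible. -/
def OnlineValid (k : ℕ) (A : List ℝ → ℕ) : Prop :=
  ∀ L : List ℝ, ValidInput L → IsFeasible k L (onlinePacking A L)

/-- The number of bins used by online algorithm `A` on input `L`. -/
def onlineBins (A : List ℝ → ℕ) (L : List ℝ) : ℕ :=
  binsUsed L (onlinePacking A L)

/-- The state of First Fit: a list of open bins (in order of opening),
each recorded as (number of items, total size). `ffFind` returns the index of
the first bin that can receive an item of size `x` (it has at most `k-1` items
and the item fits); if none, the index of a new bin. -/
def ffFind (k : ℕ) (x : ℝ) : List (ℕ × ℝ) → ℕ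
  | [] => 0
  | b :: bs => if b.1 < k ∧ b.2 + x ≤ 1 then 0 else ffFind k x bs + 1

/-- Update the First Fit state after packing an item of size `x`. -/
def ffUpdate (k : ℕ) (x : ℝ) : List (ℕ × ℝ) → List (ℕ × ℝ)
  | [] => [(1, x)]
  | b :: bs =>
      if b.1 < k ∧ b.2 + x ≤ 1 then (b.1 + 1, b.2 + x) :: bs
      else b :: ffUpdate k x bs

/-- The final state of First Fit with cardinality constraint `k` on input `L`. -/
def ffState (k : ℕ) (L : List ℝ) : List (ℕ × ℝ) :=
  L.foldl (fun bs x => ffUpdate k x bs) []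

/-- The number of bins used by First Fit with cardinality constraint `k` on `L`. -/
def FF (k : ℕ) (L : List ℝ) : ℕ := (ffState k L).length

/-- The bin index into which First Fit packs the `i`-th item of `L`. -/
def ffAssign (k : ℕ) (L : List ℝ) (i : Fin L.length) : ℕ :=
  ffFind k (L.get i) (ffState k (L.take i.1))

/-! ### Two packings of the same items -/

/-- The items of `I` that the packing `g` puts into bin `b`. -/
def ffBin {ι : Type*} (I : Finset ι) (g : ι → ℕ) (b : ℕ) : Finset ι :=
  I.filter (fun i => g i = b)

/-- The total size of the items of `I` that `g` puts into bin `b`. -/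
def ffLoad {ι : Type*} (I : Finset ι) (s : ι → ℝ) (g : ι → ℕ) (b : ℕ) : ℝ :=
  ∑ i ∈ ffBin I g b, s i

/-- The items `I` with sizes `s` are packed by `g` into the nonempty bins `B` in the manner of
First Fit without cardinality constraint (an item fits in no bin preceding its own, even with
respect to the final loads), and by `f` into the bins `O` without exceeding the unit capacity. -/
structure FFPair {ι : Type*} (I : Finset ι) (s : ι → ℝ) (g f : ι → ℕ) (B O : Finset ℕ) :
    Prop where
  pos : ∀ i ∈ I, 0 < s i
  gB : ∀ i ∈ I, g i ∈ B
  ne : ∀ b ∈ B, (ffBin I g b).Nonempty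
  ff : ∀ i ∈ I, ∀ b ∈ B, b < g i → 1 < ffLoad I s g b + s i
  fO : ∀ i ∈ I, f i ∈ O
  opt : ∀ o ∈ O, ∑ i ∈ I.filter (fun i => f i = o), s i ≤ 1

/-- The bonus of an item of size `a` that is not alone in its bin. As a function of `a` it is `0` up
to `1/6 + y/2`, then has slope `3`, and is constant from `1/3 - y/2` on. The scaling makes
`5 - 3 * y` the target weight of a First Fit bin. -/
def bonus (y a : ℝ) : ℝ := 3 * max 0 (min (a - (1/6 + y/2)) (1/6 - y))

/-- The total bonus of the items in bin `b`. -/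
def binBonus {ι : Type*} (I : Finset ι) (s : ι → ℝ) (g : ι → ℕ) (y : ℝ) (b : ℕ) : ℝ :=
  ∑ i ∈ ffBin I g b, bonus y (s i)

/-- Items that are alone in their bin. -/
def singles {ι : Type*} (I : Finset ι) (g : ι → ℕ) : Finset ι :=
  I.filter (fun i => (ffBin I g (g i)).card = 1)

/-- The bins containing at least two items. -/
def commonBins {ι : Type*} (I : Finset ι) (g : ι → ℕ) (B : Finset ℕ) : Finset ℕ :=
  B.filter (fun b => (ffBin I g b).card ≠ 1)

/-! ### Estimates for the bonus -/

lemma bonus_nonneg (y a : ℝ) : 0 ≤ bonus y a := by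
  unfold bonus; positivity

lemma bonus_le_cap {y : ℝ} (hy : y ≤ 1/6) (a : ℝ) : bonus y a ≤ 3 * (1/6 - y) := by
  unfold bonus
  have : max 0 (min (a - (1/6 + y/2)) (1/6 - y)) ≤ 1/6 - y :=
    max_le (by linarith) (min_le_right _ _)
  linarith

lemma bonus_eq_zero {y a : ℝ} (h : a ≤ 1/6 + y/2) : bonus y a = 0 := by
  unfold bonus
  rw [max_eq_left]
  · ring
  · exact (min_le_left _ _).trans (by linarith)

lemma bonus_le_sub {y a : ℝ} (h : 1/6 + y/2 ≤ a) : bonus y a ≤ 3 * (a - (1/6 + y/2)) := by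
  unfold bonus
  have : max 0 (min (a - (1/6 + y/2)) (1/6 - y)) ≤ a - (1/6 + y/2) :=
    max_le (by linarith) (min_le_left _ _)
  linarith

lemma le_bonus {y a x : ℝ} (h1 : 1/6 + y/2 + x ≤ a) (h2 : x ≤ 1/6 - y) : 3 * x ≤ bonus y a := by
  unfold bonus
  have : x ≤ max 0 (min (a - (1/6 + y/2)) (1/6 - y)) :=
    le_max_of_le_right (le_min (by linarith) h2)
  linarith

/-- The slope is such that a bin of the second packing without a single item has weight at most
`7.5 - 5.4 * y`, which is below the maximum `8.5 - 6 * y` by a fifth of the target `5 - 3 * y`. -/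
lemma bonus_le_mul {y a : ℝ} (hy0 : 0 ≤ y) (hy : y ≤ 1/6) (ha : 0 ≤ a) :
    bonus y a ≤ (1.5 - 5.4 * y) * a := by
  rcases le_total a (1/6 + y/2) with h | h
  · rw [bonus_eq_zero h]
    exact mul_nonneg (by linarith) ha
  · rcases le_total a (1/3 - y/2) with h' | h'
    · have := bonus_le_sub h
      nlinarith [mul_nonneg hy0 ha, mul_nonneg hy0 (sub_nonneg.2 h'), mul_nonneg hy0 hy0]
    · have := bonus_le_cap hy a
      nlinarith [mul_nonneg (sub_nonneg.2 hy) (sub_nonneg.2 h'), mul_nonneg hy0 hy0]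

/-- Two items with positive bonus already have total size above `1/3 + y`, and what exceeds that is
paid with slope `3`; if `r ≤ 1/2`, the bound is the maximum bonus of one item. -/
lemma sum_bonus_le {ι : Type*} (T : Finset ι) (s : ι → ℝ) {y r : ℝ} (hy0 : 0 ≤ y) (hy : y ≤ 1/6)
    (hs : ∀ i ∈ T, 0 ≤ s i) (hr : ∑ i ∈ T, s i ≤ r) :
    ∑ i ∈ T, bonus y (s i) ≤ 3 * (1/6 - y) + 3 * max 0 (r - 1/2) := by
  set P := T.filter (fun i => 1/6 + y/2 < s i) with hP
  have e1 : ∑ i ∈ T, bonus y (s i) = ∑ i ∈ P, bonus y (s i) := by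
    rw [hP, Finset.sum_filter]
    refine Finset.sum_congr rfl fun i _ => ?_
    split_ifs with h
    · rfl
    · exact bonus_eq_zero (not_lt.1 h)
  have e2 : ∑ i ∈ P, s i ≤ r :=
    (Finset.sum_le_sum_of_subset_of_nonneg (Finset.filter_subset _ _)
      (fun i hi _ => hs i hi)).trans hr
  have hm : 0 ≤ max 0 (r - 1/2) := le_max_left _ _
  have hm' : r - 1/2 ≤ max 0 (r - 1/2) := le_max_right _ _
  rw [e1]
  rcases Nat.lt_or_ge P.card 2 with h | h
  · have : ∑ i ∈ P, bonus y (s i) ≤ P.card • (3 * (1/6 - y)) :=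
      Finset.sum_le_card_nsmul _ _ _ fun i _ => bonus_le_cap hy _
    have h1 : (P.card : ℝ) ≤ 1 := by exact_mod_cast Nat.le_of_lt_succ h
    rw [nsmul_eq_mul] at this
    nlinarith
  · have : ∑ i ∈ P, bonus y (s i) ≤ ∑ i ∈ P, 3 * (s i - (1/6 + y/2)) :=
      Finset.sum_le_sum fun i hi => bonus_le_sub (Finset.mem_filter.1 hi).2.le
    rw [← Finset.mul_sum, Finset.sum_sub_distrib, Finset.sum_const, nsmul_eq_mul] at this
    have h2 : (2 : ℝ) ≤ P.card := by exact_mod_cast h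
    nlinarith

/-! ### Single items and the total weight -/

section pair

variable {ι : Type*} {I : Finset ι} {s : ι → ℝ} {g f : ι → ℕ} {B O : Finset ℕ}

lemma mem_ffBin {b : ℕ} {i : ι} : i ∈ ffBin I g b ↔ i ∈ I ∧ g i = b := by
  simp [ffBin]

lemma load_single {i : ι} (hi : i ∈ singles I g) : ffLoad I s g (g i) = s i := by
  obtain ⟨hi, hc⟩ := Finset.mem_filter.1 hi
  obtain ⟨j, hj⟩ := Finset.card_eq_one.1 hc
  have : i ∈ ffBin I g (g i) := mem_ffBin.2 ⟨hi, rfl⟩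
  rw [hj, Finset.mem_singleton] at this
  subst this
  simp [ffLoad, hj]

lemma single_inj {i j : ι} (hi : i ∈ singles I g) (hj : j ∈ singles I g) (h : g i = g j) :
    i = j := by
  obtain ⟨hi, hc⟩ := Finset.mem_filter.1 hi
  obtain ⟨hj, -⟩ := Finset.mem_filter.1 hj
  exact Finset.card_le_one.1 hc.le i (mem_ffBin.2 ⟨hi, rfl⟩) j (mem_ffBin.2 ⟨hj, h.symm⟩)

namespace FFPair

lemma le_load (P : FFPair I s g f B O) {i : ι} (hi : i ∈ I) : s i ≤ ffLoad I s g (g i) :=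
  Finset.single_le_sum (f := s) (fun j hj => (P.pos j (mem_ffBin.1 hj).1).le)
    (mem_ffBin.2 ⟨hi, rfl⟩)

/-- No two First Fit bins could be merged. -/
lemma two_bins (P : FFPair I s g f B O) {b b' : ℕ} (hb : b ∈ B) (hb' : b' ∈ B) (h : b ≠ b') :
    1 < ffLoad I s g b + ffLoad I s g b' := by
  wlog hlt : b < b' generalizing b b'
  · rw [add_comm]
    exact this hb' hb h.symm (lt_of_le_of_ne (not_lt.1 hlt) h.symm)
  obtain ⟨i, hi⟩ := P.ne b' hb'
  obtain ⟨hiI, rfl⟩ := mem_ffBin.1 hi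
  have := P.ff i hiI b hb hlt
  have := P.le_load hiI
  linarith

lemma sum_bins (P : FFPair I s g f B O) {M : Type*} [AddCommMonoid M] (h : ι → M) :
    ∑ b ∈ B, ∑ i ∈ ffBin I g b, h i = ∑ i ∈ I, h i :=
  Finset.sum_fiberwise_of_maps_to P.gB h

lemma sum_load_le (P : FFPair I s g f B O) : ∑ b ∈ B, ffLoad I s g b ≤ O.card := by
  unfold ffLoad
  rw [P.sum_bins, ← Finset.sum_fiberwise_of_maps_to P.fO s]
  refine (Finset.sum_le_card_nsmul _ _ _ P.opt).trans ?_
  simp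

lemma card_eq (P : FFPair I s g f B O) : I.card = ∑ b ∈ B, (ffBin I g b).card := by
  rw [Finset.card_eq_sum_ones, ← P.sum_bins]
  simp

lemma single_add (P : FFPair I s g f B O) {i j : ι} (hi : i ∈ singles I g) (hj : j ∈ singles I g)
    (h : i ≠ j) : 1 < s i + s j := by
  have := P.two_bins (P.gB i (Finset.mem_filter.1 hi).1) (P.gB j (Finset.mem_filter.1 hj).1)
    (fun e => h (single_inj hi hj e))
  rwa [load_single hi, load_single hj] at this

lemma single_add_common (P : FFPair I s g f B O) {i : ι} {b : ℕ} (hi : i ∈ singles I g)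
    (hb : b ∈ commonBins I g B) : 1 < s i + ffLoad I s g b := by
  obtain ⟨hb, hc⟩ := Finset.mem_filter.1 hb
  obtain ⟨hi', hc'⟩ := Finset.mem_filter.1 hi
  have := P.two_bins (P.gB i hi') hb (by rintro rfl; exact hc hc')
  rwa [load_single hi] at this

/-- Distinct single items are in distinct bins of the second packing. -/
lemma single_f_inj (P : FFPair I s g f B O) {i j : ι} (hi : i ∈ singles I g) (hj : j ∈ singles I g)
    (h : f i = f j) : i = j := by
  by_contra hne
  have h1 := P.single_add hi hj hne
  have hi' := (Finset.mem_filter.1 hi).1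
  have hj' := (Finset.mem_filter.1 hj).1
  have h2 := P.opt (f i) (P.fO i hi')
  have h3 : ∑ x ∈ ({i, j} : Finset ι), s x ≤ ∑ x ∈ I.filter (fun x => f x = f i), s x := by
    refine Finset.sum_le_sum_of_subset_of_nonneg ?_
      (fun x hx _ => (P.pos x (Finset.mem_filter.1 hx).1).le)
    intro x hx
    rcases Finset.mem_insert.1 hx with rfl | hx
    · simp [hi']
    · rw [Finset.mem_singleton] at hx
      subst hx
      simp [hj', h]
  rw [Finset.sum_pair hne] at h3
  linarith

lemma card_singles_le (P : FFPair I s g f B O) : (singles I g).card ≤ O.card :=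
  Finset.card_le_card_of_injOn f (fun i hi => P.fO i (Finset.mem_filter.1 hi).1)
    (fun _ hi _ hj h => P.single_f_inj hi hj h)

lemma sum_singles (P : FFPair I s g f B O) {M : Type*} [AddCommMonoid M] (h : ι → M) :
    ∑ i ∈ singles I g, h i =
      ∑ b ∈ B.filter (fun b => (ffBin I g b).card = 1), ∑ i ∈ ffBin I g b, h i := by
  rw [singles, Finset.sum_filter, ← P.sum_bins, Finset.sum_filter]
  refine Finset.sum_congr rfl fun b _ => ?_
  split_ifs with hc
  · exact Finset.sum_congr rfl fun i hi => by rw [(mem_ffBin.1 hi).2, if_pos hc]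
  · exact Finset.sum_eq_zero fun i hi => by rw [(mem_ffBin.1 hi).2, if_neg hc]

lemma card_singles (P : FFPair I s g f B O) :
    (singles I g).card = (B.filter (fun b => (ffBin I g b).card = 1)).card := by
  rw [Finset.card_eq_sum_ones, P.sum_singles, Finset.card_eq_sum_ones]
  refine Finset.sum_congr rfl fun b hb => ?_
  rw [← Finset.card_eq_sum_ones, (Finset.mem_filter.1 hb).2]

lemma card_bins (P : FFPair I s g f B O) :
    B.card = (singles I g).card + (commonBins I g B).card := by
  rw [P.card_singles, commonBins, Finset.card_filter_add_card_filter_not]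

lemma sum_split (P : FFPair I s g f B O) {M : Type*} [AddCommMonoid M] (h : ι → M) :
    ∑ i ∈ I, h i = ∑ i ∈ singles I g, h i +
      ∑ b ∈ commonBins I g B, ∑ i ∈ ffBin I g b, h i := by
  rw [P.sum_singles, commonBins, Finset.sum_filter_add_sum_filter_not, P.sum_bins]

lemma two_le_card (P : FFPair I s g f B O) {b : ℕ} (hb : b ∈ commonBins I g B) :
    2 ≤ (ffBin I g b).card := by
  obtain ⟨hb, hc⟩ := Finset.mem_filter.1 hb
  have := Finset.card_pos.2 (P.ne b hb)
  omega

/-- Double counting of the weights: a bin of the second packing contains at most one single item,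
and an exceptional single item of size `1/2 - t` leaves room for an additional bonus of at most
`3 * t`, which is charged to that single item. -/
lemma weight_le (P : FFPair I s g f B O) {y : ℝ} (hy0 : 0 ≤ y) (hy : y ≤ 1/6) :
    ∑ i ∈ singles I g, (6 * s i + (2 - 3 * y) - 3 * max 0 (1/2 - s i)) +
      ∑ b ∈ commonBins I g B, (6 * ffLoad I s g b + binBonus I s g y b) ≤
    (7.5 - 5.4 * y) * O.card + (1 - 0.6 * y) * (singles I g).card := by
  set W : ι → ℝ := fun i => 6 * s i + if i ∈ singles I g then 2 - 3 * y else bonus y (s i) with hW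
  set R : ι → ℝ := fun i => (1 - 0.6 * y) + 3 * max 0 (1/2 - s i) with hR
  have key : ∀ o ∈ O, ∑ i ∈ I.filter (fun i => f i = o), W i ≤ (7.5 - 5.4 * y) +
      ∑ i ∈ I.filter (fun i => f i = o), if i ∈ singles I g then R i else 0 := by
    intro o ho
    have hopt := P.opt o ho
    set T := I.filter (fun i => f i = o) with hT
    have hpos : ∀ i ∈ T, 0 ≤ s i := fun i hi => (P.pos i (Finset.mem_filter.1 hi).1).le
    by_cases hex : ∃ j ∈ T, j ∈ singles I g
    · obtain ⟨j, hjT, hj⟩ := hex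
      have huniq : ∀ i ∈ T.erase j, i ∉ singles I g := by
        intro i hi hi'
        obtain ⟨hne, hiT⟩ := Finset.mem_erase.1 hi
        exact hne (P.single_f_inj hi' hj
          ((Finset.mem_filter.1 hiT).2.trans (Finset.mem_filter.1 hjT).2.symm))
      rw [← Finset.add_sum_erase T s hjT] at hopt
      rw [← Finset.add_sum_erase T W hjT, ← Finset.add_sum_erase T _ hjT]
      have h1 : ∑ i ∈ T.erase j, (if i ∈ singles I g then R i else 0) = 0 :=
        Finset.sum_eq_zero fun i hi => if_neg (huniq i hi)
      have h2 : ∑ i ∈ T.erase j, W i = 6 * ∑ i ∈ T.erase j, s i +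
          ∑ i ∈ T.erase j, bonus y (s i) := by
        rw [Finset.mul_sum, ← Finset.sum_add_distrib]
        exact Finset.sum_congr rfl fun i hi => by simp [hW, huniq i hi]
      have h3 := sum_bonus_le (T.erase j) s hy0 hy
        (fun i hi => hpos i (Finset.mem_of_mem_erase hi)) (r := 1 - s j) (by linarith)
      rw [show 1 - s j - 1/2 = 1/2 - s j by ring] at h3
      rw [h1, h2, if_pos hj]
      simp only [hW, hR, if_pos hj]
      linarith
    · push Not at hex
      have h1 : ∑ i ∈ T, (if i ∈ singles I g then R i else 0) = 0 :=
        Finset.sum_eq_zero fun i hi => if_neg (hex i hi)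
      have h2 : ∑ i ∈ T, W i ≤ ∑ i ∈ T, (7.5 - 5.4 * y) * s i := by
        refine Finset.sum_le_sum fun i hi => ?_
        have := bonus_le_mul hy0 hy (hpos i hi)
        simp only [hW, if_neg (hex i hi)]
        linarith
      rw [← Finset.mul_sum] at h2
      rw [h1]
      nlinarith
  have hsum := Finset.sum_le_sum key
  rw [Finset.sum_fiberwise_of_maps_to P.fO W, P.sum_split W,
    Finset.sum_add_distrib (f := fun _ => 7.5 - 5.4 * y),
    Finset.sum_fiberwise_of_maps_to P.fO (fun i => if i ∈ singles I g then R i else 0)] at hsum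
  have e1 : ∑ i ∈ I, (if i ∈ singles I g then R i else 0) = ∑ i ∈ singles I g, R i := by
    rw [← Finset.sum_filter]
    refine Finset.sum_congr ?_ fun _ _ => rfl
    ext i
    simp only [Finset.mem_filter]
    exact ⟨fun h => h.2, fun h => ⟨(Finset.mem_filter.1 h).1, h⟩⟩
  have e2 : ∑ b ∈ commonBins I g B, ∑ i ∈ ffBin I g b, W i =
      ∑ b ∈ commonBins I g B, (6 * ffLoad I s g b + binBonus I s g y b) := by
    refine Finset.sum_congr rfl fun b hb => ?_
    rw [ffLoad, binBonus, Finset.mul_sum, ← Finset.sum_add_distrib]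
    refine Finset.sum_congr rfl fun i hi => ?_
    have : i ∉ singles I g := by
      intro h
      have := (Finset.mem_filter.1 h).2
      rw [(mem_ffBin.1 hi).2] at this
      exact (Finset.mem_filter.1 hb).2 this
    simp [hW, this]
  have e3 : ∑ i ∈ singles I g, W i = ∑ i ∈ singles I g, (6 * s i + (2 - 3 * y)) :=
    Finset.sum_congr rfl fun i hi => by simp [hW, hi]
  rw [e1, e2, e3] at hsum
  simp only [hR, Finset.sum_add_distrib, Finset.sum_const, nsmul_eq_mul,
    Finset.sum_sub_distrib] at hsum ⊢
  linarith

/-! ### Amortizing the bonus along the bins with several items -/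

/-- The bonus of the next bin pays for the missing load of a bin. -/
lemma chain_step (P : FFPair I s g f B O) {y : ℝ} {b b' : ℕ}
    (hb : b ∈ commonBins I g B) (hb' : b' ∈ commonBins I g B) (hlt : b < b')
    (hl : 2/3 + y/2 ≤ ffLoad I s g b) :
    5 - 3 * y ≤ 6 * ffLoad I s g b + binBonus I s g y b' := by
  set x := 5/6 - y/2 - ffLoad I s g b with hx
  have hnn : 0 ≤ binBonus I s g y b' := Finset.sum_nonneg fun i _ => bonus_nonneg _ _
  rcases le_total x 0 with h0 | h0
  · linarith
  have h1 : (ffBin I g b').card • (3 * x) ≤ binBonus I s g y b' := by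
    refine Finset.card_nsmul_le_sum _ _ _ fun i hi => ?_
    obtain ⟨hiI, rfl⟩ := mem_ffBin.1 hi
    have := P.ff i hiI b (Finset.mem_filter.1 hb).1 hlt
    exact le_bonus (by linarith) (by linarith)
  have h2 : (2 : ℝ) ≤ (ffBin I g b').card := by exact_mod_cast P.two_le_card hb'
  rw [nsmul_eq_mul] at h1
  nlinarith

lemma load_of_lt (P : FFPair I s g f B O) {b b' : ℕ}
    (hb : b ∈ commonBins I g B) (hb' : b' ∈ commonBins I g B) (hlt : b < b') :
    2 * (1 - ffLoad I s g b) < ffLoad I s g b' := by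
  obtain ⟨i, hi, j, hj, hij⟩ := Finset.one_lt_card.1 (P.two_le_card hb')
  obtain ⟨hiI, hgi⟩ := mem_ffBin.1 hi
  obtain ⟨hjI, hgj⟩ := mem_ffBin.1 hj
  have h1 := P.ff i hiI b (Finset.mem_filter.1 hb).1 (hgi ▸ hlt)
  have h2 := P.ff j hjI b (Finset.mem_filter.1 hb).1 (hgj ▸ hlt)
  have h3 : ∑ x ∈ ({i, j} : Finset ι), s x ≤ ffLoad I s g b' := by
    refine Finset.sum_le_sum_of_subset_of_nonneg ?_
      (fun x hx _ => (P.pos x (mem_ffBin.1 hx).1).le)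
    intro x hx
    rcases Finset.mem_insert.1 hx with rfl | hx
    · exact hi
    · rwa [Finset.mem_singleton.1 hx]
  rw [Finset.sum_pair hij] at h3
  linarith

/-- A bin following a bin of load below `2/3` has two items larger than `1/3`. -/
lemma chain_bad (P : FFPair I s g f B O) {b b' : ℕ}
    (hb : b ∈ commonBins I g B) (hb' : b' ∈ commonBins I g B) (hlt : b < b')
    (hl : ffLoad I s g b < 2/3) :
    12 * (1 - ffLoad I s g b) + 1 ≤ 6 * ffLoad I s g b' + binBonus I s g 0 b' := by
  have h0 := P.load_of_lt hb hb' hlt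
  have h1 : (ffBin I g b').card • (1/2 : ℝ) ≤ binBonus I s g 0 b' := by
    refine Finset.card_nsmul_le_sum _ _ _ fun i hi => ?_
    obtain ⟨hiI, rfl⟩ := mem_ffBin.1 hi
    have := P.ff i hiI b (Finset.mem_filter.1 hb).1 hlt
    have := le_bonus (y := 0) (a := s i) (x := 1/6) (by linarith) (by norm_num)
    linarith
  have h2 : (2 : ℝ) ≤ (ffBin I g b').card := by exact_mod_cast P.two_le_card hb'
  rw [nsmul_eq_mul] at h1
  nlinarith

/-- Some item of a bin with several items has at most half of the load. -/
lemma load_before (P : FFPair I s g f B O) {b b' : ℕ}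
    (hb : b ∈ commonBins I g B) (hb' : b' ∈ commonBins I g B) (hlt : b < b') :
    1 - ffLoad I s g b' / 2 < ffLoad I s g b := by
  have := P.load_of_lt hb hb' hlt
  linarith

/-- Amortization if only the last bin may have a load below `2/3 + y/2`. -/
lemma chain_good (P : FFPair I s g f B O) {y : ℝ} (C : Finset ℕ) :
    C ⊆ commonBins I g B → ∀ (m a : ℕ), m ∈ C → a ∈ C → (∀ b ∈ C, b ≤ m) → (∀ b ∈ C, a ≤ b) →
    (∀ b ∈ C, b < m → 2/3 + y/2 ≤ ffLoad I s g b) →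
    (5 - 3 * y) * (C.card - 1) + 6 * ffLoad I s g m + binBonus I s g y a ≤
      ∑ b ∈ C, (6 * ffLoad I s g b + binBonus I s g y b) := by
  induction C using Finset.induction_on_max with
  | empty => intro _ m a hm; simp at hm
  | insert c C hc ih =>
    intro hsub m a hm ha hmax hmin hload
    have hcC : c ∉ C := fun h => lt_irrefl _ (hc c h)
    obtain rfl : m = c := by
      rcases Finset.mem_insert.1 hm with h | h
      · exact h
      · exact absurd (hc m h) (not_lt.2 (hmax c (Finset.mem_insert_self _ _)))
    rw [Finset.sum_insert hcC, Finset.card_insert_of_notMem hcC]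
    rcases C.eq_empty_or_nonempty with rfl | hne
    · have : a = m := by simpa using ha
      subst this
      simp
    · set p := C.max' hne with hp
      have hpC : p ∈ C := C.max'_mem hne
      have haC : a ∈ C := by
        rcases Finset.mem_insert.1 ha with h | h
        · exact absurd (hc p hpC) (not_lt.2 (h ▸ hmin p (Finset.mem_insert_of_mem hpC)))
        · exact h
      have h1 := ih (fun b hb => hsub (Finset.mem_insert_of_mem hb)) p a hpC haC
        (fun b hb => C.le_max' b hb) (fun b hb => hmin b (Finset.mem_insert_of_mem hb))
        (fun b hb _ => hload b (Finset.mem_insert_of_mem hb) (hc b hb))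
      have h2 := P.chain_step (hsub (Finset.mem_insert_of_mem hpC))
        (hsub (Finset.mem_insert_self _ _)) (hc p hpC)
        (hload p (Finset.mem_insert_of_mem hpC) (hc p hpC))
      push_cast
      linarith

/-- Amortization with the plain weights (`y = 0`). In the second alternative some bin before the
last one has a load below `2/3`, and all later bins pay for themselves. -/
lemma chain_plain (P : FFPair I s g f B O) (C : Finset ℕ) :
    C ⊆ commonBins I g B → ∀ (m a : ℕ), m ∈ C → a ∈ C → (∀ b ∈ C, b ≤ m) → (∀ b ∈ C, a ≤ b) →
    ((∀ b ∈ C, b < m → 2/3 ≤ ffLoad I s g b) ∧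
      5 * ((C.card : ℝ) - 1) + 6 * ffLoad I s g m + binBonus I s g 0 a ≤
        ∑ b ∈ C, (6 * ffLoad I s g b + binBonus I s g 0 b)) ∨
    ((∃ b ∈ C, b < m ∧ ffLoad I s g b < 2/3) ∧
      5 * (C.card : ℝ) - 1 + binBonus I s g 0 a + max 0 (4 - 6 * ffLoad I s g a) ≤
        ∑ b ∈ C, (6 * ffLoad I s g b + binBonus I s g 0 b)) := by
  induction C using Finset.induction_on_max with
  | empty => intro _ m a hm; simp at hm
  | insert c C hc ih =>
    intro hsub m a hm ha hmax hmin
    have hcC : c ∉ C := fun h => lt_irrefl _ (hc c h)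
    obtain rfl : m = c := by
      rcases Finset.mem_insert.1 hm with h | h
      · exact h
      · exact absurd (hc m h) (not_lt.2 (hmax c (Finset.mem_insert_self _ _)))
    rw [Finset.sum_insert hcC, Finset.card_insert_of_notMem hcC]
    rcases C.eq_empty_or_nonempty with rfl | hne
    · have : a = m := by simpa using ha
      subst this
      left
      simp
    · set p := C.max' hne with hp
      have hpC : p ∈ C := C.max'_mem hne
      have haC : a ∈ C := by
        rcases Finset.mem_insert.1 ha with h | h
        · exact absurd (hc p hpC) (not_lt.2 (h ▸ hmin p (Finset.mem_insert_of_mem hpC)))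
        · exact h
      have hmC := hsub (Finset.mem_insert_self m C)
      have hpC' := hsub (Finset.mem_insert_of_mem hpC)
      rcases ih (fun b hb => hsub (Finset.mem_insert_of_mem hb)) p a hpC haC
        (fun b hb => C.le_max' b hb) (fun b hb => hmin b (Finset.mem_insert_of_mem hb)) with
        ⟨h1, h2⟩ | ⟨⟨b, hbC, hbp, hb⟩, h2⟩
      · rcases lt_or_ge (ffLoad I s g p) (2/3) with hl | hl
        · right
          refine ⟨⟨p, Finset.mem_insert_of_mem hpC, hc p hpC, hl⟩, ?_⟩
          have h3 := P.chain_bad hpC' hmC (hc p hpC) hl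
          have h4 : max 0 (4 - 6 * ffLoad I s g a) ≤ 4 - 6 * ffLoad I s g p := by
            refine max_le (by linarith) ?_
            rcases (C.le_max' a haC).lt_or_eq with h | h
            · have := h1 a haC h
              linarith
            · rw [h]
          push_cast
          linarith
        · left
          refine ⟨fun b hb hbm => ?_, ?_⟩
          · rcases Finset.mem_insert.1 hb with h | h
            · omega
            · rcases (C.le_max' b h).lt_or_eq with h' | h'
              · exact h1 b h h'
              · rw [h']; exact hl
          · have h3 := P.chain_step (y := 0) hpC' hmC (hc p hpC) (by linarith)
            push_cast
            linarith
      · right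
        refine ⟨⟨b, Finset.mem_insert_of_mem hbC, hc b hbC, hb⟩, ?_⟩
        have h3 := P.chain_bad (hsub (Finset.mem_insert_of_mem hbC)) hmC (hc b hbC) hb
        push_cast
        linarith

/-- Bonus of a bin with at most three items. -/
lemma bonus_three {y : ℝ} (hy0 : 0 ≤ y) {b : ℕ}
    (hc : (ffBin I g b).card ≤ 3) :
    1/2 - 3 * y ≤ binBonus I s g y b ∨
      3 * ffLoad I s g b - 3/2 - 9/2 * y ≤ binBonus I s g y b := by
  by_cases h : ∃ i ∈ ffBin I g b, 1/3 - y/2 ≤ s i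
  · left
    obtain ⟨i, hi, hs⟩ := h
    have h1 := le_bonus (y := y) (a := s i) (x := 1/6 - y) (by linarith) le_rfl
    have h2 : bonus y (s i) ≤ binBonus I s g y b :=
      Finset.single_le_sum (f := fun i => bonus y (s i)) (fun j _ => bonus_nonneg _ _) hi
    linarith
  · right
    push Not at h
    have h1 : ∑ i ∈ ffBin I g b, 3 * (s i - (1/6 + y/2)) ≤ binBonus I s g y b :=
      Finset.sum_le_sum fun i hi => le_bonus (by linarith) (by linarith [h i hi])
    rw [← Finset.mul_sum, Finset.sum_sub_distrib, Finset.sum_const, nsmul_eq_mul] at h1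
    have h2 : ((ffBin I g b).card : ℝ) ≤ 3 := by exact_mod_cast hc
    have h3 : ffLoad I s g b = ∑ i ∈ ffBin I g b, s i := rfl
    nlinarith

/-! ### Few single items: comparing total sizes -/

/-- All bins with several items, except possibly one, have load at least `2/3`. -/
lemma exists_two_thirds (P : FFPair I s g f B O) (hC : (commonBins I g B).Nonempty) :
    ∃ b₀ ∈ commonBins I g B, ∀ b ∈ (commonBins I g B).erase b₀, 2/3 ≤ ffLoad I s g b := by
  obtain ⟨b₀, hb₀, hmin⟩ := Finset.exists_min_image _ (ffLoad I s g) hC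
  refine ⟨b₀, hb₀, fun b hb => ?_⟩
  obtain ⟨hne, hb⟩ := Finset.mem_erase.1 hb
  have h0 := hmin b hb
  by_contra! hlt
  rcases lt_or_gt_of_ne hne with h | h
  · linarith [P.load_of_lt hb hb₀ h]
  · linarith [P.load_of_lt hb₀ hb h]

lemma sum_load_split (P : FFPair I s g f B O) :
    ∑ i ∈ singles I g, s i + ∑ b ∈ commonBins I g B, ffLoad I s g b ≤ O.card := by
  have := P.sum_load_le
  unfold ffLoad at this ⊢
  rwa [P.sum_bins, P.sum_split] at this

lemma bound_of_no_singles (P : FFPair I s g f B O) (hC : (commonBins I g B).Nonempty)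
    (h0 : (singles I g).card = 0) : 10 * B.card ≤ 17 * O.card := by
  obtain ⟨b₀, hb₀, hl⟩ := P.exists_two_thirds hC
  have hs := P.sum_load_split
  rw [P.card_bins, h0]
  rw [Finset.card_eq_zero.1 h0, Finset.sum_empty, ← Finset.add_sum_erase _ _ hb₀] at hs
  have hcard := Finset.card_erase_add_one hb₀
  set D := (commonBins I g B).erase b₀ with hD
  rcases D.eq_empty_or_nonempty with h | ⟨b, hb⟩
  · obtain ⟨i, hi⟩ := P.ne b₀ (Finset.mem_filter.1 hb₀).1
    have hO := Finset.card_pos.2 ⟨_, P.fO i (mem_ffBin.1 hi).1⟩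
    rw [h, Finset.card_empty] at hcard
    omega
  · have h1 := P.two_bins (Finset.mem_filter.1 hb₀).1
      (Finset.mem_filter.1 (Finset.mem_of_mem_erase hb)).1 (Finset.ne_of_mem_erase hb).symm
    rw [← Finset.add_sum_erase _ _ hb] at hs
    have h2 : (D.erase b).card • (2/3 : ℝ) ≤ ∑ x ∈ D.erase b, ffLoad I s g x :=
      Finset.card_nsmul_le_sum _ _ _ fun x hx => hl x (Finset.mem_of_mem_erase hx)
    have hcard' := Finset.card_erase_add_one hb
    rw [nsmul_eq_mul] at h2
    have h3 : (2 * ((D.erase b).card : ℝ)) + 3 < 3 * O.card := by linarith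
    have h4 : 2 * (D.erase b).card + 3 < 3 * O.card := by exact_mod_cast h3
    omega

lemma bound_of_small_single (P : FFPair I s g f B O) (hC : (commonBins I g B).Nonempty)
    {j : ι} (hj : j ∈ singles I g) (hj2 : s j ≤ 1/2) (h2 : (singles I g).card ≤ 2) :
    10 * B.card ≤ 17 * O.card := by
  obtain ⟨b₀, hb₀, hl⟩ := P.exists_two_thirds hC
  have hs := P.sum_load_split
  rw [← Finset.add_sum_erase _ _ hb₀, ← Finset.add_sum_erase _ _ hj] at hs
  have h1 := P.single_add_common hj hb₀
  have h3 : ((commonBins I g B).erase b₀).card • (2/3 : ℝ) ≤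
      ∑ x ∈ (commonBins I g B).erase b₀, ffLoad I s g x :=
    Finset.card_nsmul_le_sum _ _ _ hl
  have h4 : ((singles I g).erase j).card • (1/2 : ℝ) ≤ ∑ x ∈ (singles I g).erase j, s x :=
    Finset.card_nsmul_le_sum _ _ _ fun x hx => by
      obtain ⟨hne, hx⟩ := Finset.mem_erase.1 hx
      linarith [P.single_add hx hj hne]
  rw [nsmul_eq_mul] at h3 h4
  have h5 : 4 * (((commonBins I g B).erase b₀).card : ℝ) + 3 * ((singles I g).erase j).card + 6
      < 6 * O.card := by linarith
  have h6 : 4 * ((commonBins I g B).erase b₀).card + 3 * ((singles I g).erase j).card + 6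
      < 6 * O.card := by exact_mod_cast h5
  have e1 := Finset.card_erase_add_one hb₀
  have e2 := Finset.card_erase_add_one hj
  have e3 := P.card_singles_le
  rw [P.card_bins]
  rcases (by omega : ((singles I g).erase j).card = 0 ∨ ((singles I g).erase j).card = 1) with
    h | h <;> rw [h] at h6 e2 <;> omega

/-! ### The weighted inequality -/

/-- In total, the single items exceed their target weight `5 - 3 * y` per item (after the correction
in `weight_le`), and the surplus covers six times what the load of a common bin lacks to `1/2`. -/
lemma singles_surplus (P : FFPair I s g f B O) (h1 : (singles I g).Nonempty)
    (h3 : (∃ j ∈ singles I g, s j ≤ 1/2) → 3 ≤ (singles I g).card)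
    {b : ℕ} (hb : b ∈ commonBins I g B) :
    6 * max 0 (1/2 - ffLoad I s g b) <
      ∑ i ∈ singles I g, (6 * (s i - 1/2) - 3 * max 0 (1/2 - s i)) := by
  by_cases hA : ∃ j ∈ singles I g, s j ≤ 1/2
  · have hc := h3 hA
    obtain ⟨j, hj, hj2⟩ := hA
    rw [max_eq_left (by linarith [P.single_add_common hj hb]), ← Finset.add_sum_erase _ _ hj,
      max_eq_right (by linarith)]
    have hc' := Finset.card_erase_add_one hj
    have hne : ((singles I g).erase j).Nonempty := Finset.card_pos.1 (by omega)
    have h4 : ∑ i ∈ (singles I g).erase j, (6 * (1/2 - s j)) <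
        ∑ i ∈ (singles I g).erase j, (6 * (s i - 1/2) - 3 * max 0 (1/2 - s i)) := by
      refine Finset.sum_lt_sum_of_nonempty hne fun i hi => ?_
      obtain ⟨hij, hi⟩ := Finset.mem_erase.1 hi
      have := P.single_add hi hj hij
      rw [max_eq_left (by linarith)]
      linarith
    rw [Finset.sum_const, nsmul_eq_mul] at h4
    have h5 : (2 : ℝ) ≤ ((singles I g).erase j).card := by exact_mod_cast (by omega)
    nlinarith
  · push Not at hA
    obtain ⟨j, hj⟩ := h1
    have h4 : ∀ i ∈ singles I g, 0 ≤ 6 * (s i - 1/2) - 3 * max 0 (1/2 - s i) := fun i hi => by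
      have := hA i hi
      rw [max_eq_left (by linarith)]
      linarith
    refine lt_of_lt_of_le ?_ (Finset.single_le_sum h4 hj)
    have := hA j hj
    have := P.single_add_common hj hb
    rw [max_eq_left (b := 1/2 - s j) (by linarith)]
    rcases max_cases 0 (1/2 - ffLoad I s g b) with h | h <;> linarith

/-- The parameter `y` is the amount by which the load of the last common bin is below `2/3`,
clamped to `[0, 1/6]`. The slack `v` comes mainly from the bonus of the first common bin, which pays
for no preceding bin. -/
lemma weighted_bound (P : FFPair I s g f B O) (hC : (commonBins I g B).Nonempty)
    (h1 : (singles I g).Nonempty)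
    (h3 : (∃ j ∈ singles I g, s j ≤ 1/2) → 3 ≤ (singles I g).card) :
    ∃ y v : ℝ, 0 ≤ y ∧ y ≤ 1/6 ∧ 0 ≤ v ∧
      (2 ≤ (commonBins I g B).card → (∀ b ∈ commonBins I g B, (ffBin I g b).card ≤ 3) →
        1/2 - 3 * y ≤ v) ∧
      (5 - 3 * y) * B.card + v < (8.5 - 6 * y) * O.card
        - (1 - 0.6 * y) * (O.card - (singles I g).card) + 1 + 3 * y := by
  set C := commonBins I g B with hCdef
  set m := C.max' hC with hm
  set a := C.min' hC with ha
  have hmC : m ∈ C := C.max'_mem hC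
  have haC : a ∈ C := C.min'_mem hC
  have hmax : ∀ b ∈ C, b ≤ m := fun b hb => C.le_max' b hb
  have hmin : ∀ b ∈ C, a ≤ b := fun b hb => C.min'_le b hb
  have hE := P.singles_surplus h1 h3 hmC
  set E := ∑ i ∈ singles I g, (6 * (s i - 1/2) - 3 * max 0 (1/2 - s i)) with hEdef
  have hN : (B.card : ℝ) = (singles I g).card + C.card := by exact_mod_cast P.card_bins
  have hW : ∀ y : ℝ, 0 ≤ y → y ≤ 1/6 → (5 - 3 * y) * (singles I g).card + E +
      ∑ b ∈ C, (6 * ffLoad I s g b + binBonus I s g y b) ≤ (8.5 - 6 * y) * O.card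
        - (1 - 0.6 * y) * (O.card - (singles I g).card) := by
    intro y hy0 hy
    have h := P.weight_le hy0 hy
    have e : ∑ i ∈ singles I g, (6 * s i + (2 - 3 * y) - 3 * max 0 (1/2 - s i)) =
        (5 - 3 * y) * (singles I g).card + E := by
      rw [hEdef, mul_comm _ ((singles I g).card : ℝ), ← nsmul_eq_mul, ← Finset.sum_const, ← Finset.sum_add_distrib]
      exact Finset.sum_congr rfl fun i _ => by ring
    rw [e] at h
    linarith
  have hbn : ∀ y, 0 ≤ binBonus I s g y a := fun y => Finset.sum_nonneg fun i _ => bonus_nonneg _ _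
  rcases lt_or_ge (ffLoad I s g m) (2/3) with hl | hl
  · set y := min (2/3 - ffLoad I s g m) (1/6) with hy
    have hy0 : 0 ≤ y := le_min (by linarith) (by norm_num)
    have hy6 : y ≤ 1/6 := min_le_right _ _
    have hyl : y ≤ 2/3 - ffLoad I s g m := min_le_left _ _
    have hbefore : ∀ b ∈ C, b < m → 2/3 + y/2 ≤ ffLoad I s g b := fun b hb hbm => by
      have := P.load_before hb hmC hbm
      linarith
    refine ⟨y, binBonus I s g y a, hy0, hy6, hbn y, fun hc2 h4 => ?_, ?_⟩
    · have ham : a < m := by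
        obtain ⟨p, hp, q, hq, hpq⟩ := Finset.one_lt_card.1 hc2
        have := hmax p hp
        have := hmax q hq
        have := hmin p hp
        have := hmin q hq
        omega
      have := hbefore a haC ham
      rcases bonus_three (s := s) hy0 (h4 a haC) with h | h
      · exact h
      · linarith
    · have hc := P.chain_good (y := y) C subset_rfl m a hmC haC hmax hmin hbefore
      have h := hW y hy0 hy6
      have hlast : 5 - 3 * y - 6 * ffLoad I s g m - 6 * max 0 (1/2 - ffLoad I s g m) ≤
          1 + 3 * y := by
        have := le_max_left 0 (1/2 - ffLoad I s g m)
        have := le_max_right 0 (1/2 - ffLoad I s g m)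
        rcases min_cases (2/3 - ffLoad I s g m) (1/6) with h | h <;> linarith
      rw [hN]
      linarith
  · refine ⟨0, binBonus I s g 0 a + max 0 (4 - 6 * ffLoad I s g a), le_rfl, by norm_num,
      add_nonneg (hbn 0) (le_max_left _ _), fun _ h4 => ?_, ?_⟩
    · have := le_max_left 0 (4 - 6 * ffLoad I s g a)
      have := le_max_right 0 (4 - 6 * ffLoad I s g a)
      rcases bonus_three (s := s) le_rfl (h4 a haC) with h | h <;> linarith
    · have hc : 5 * (C.card : ℝ) - 1 + binBonus I s g 0 a + max 0 (4 - 6 * ffLoad I s g a) ≤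
          ∑ b ∈ C, (6 * ffLoad I s g b + binBonus I s g 0 b) := by
        rcases P.chain_plain C subset_rfl m a hmC haC hmax hmin with ⟨h, h'⟩ | ⟨-, h'⟩
        · have : 2/3 ≤ ffLoad I s g a := by
            rcases (hmin m hmC).lt_or_eq with h'' | h''
            · exact h a haC h''
            · rwa [h'']
          rw [max_eq_left (by linarith)]
          linarith
        · exact h'
      have h := hW 0 le_rfl (by norm_num)
      have := le_max_left 0 (1/2 - ffLoad I s g m)
      rw [hN]
      linarith

/-! ### Counting items when every bin of the second packing has a single item -/

/-- The number of quarters that an item of size `x` counts for. This is not `⌊4 * x⌋`: size exactly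
`1/2` counts once, and larger sizes count twice. -/
def quarters (x : ℝ) : ℕ := if x < 1/4 then 0 else if x ≤ 1/2 then 1 else 2

lemma quarters_le (x : ℝ) (hx : 0 ≤ x) : (quarters x : ℝ) ≤ 4 * x := by
  unfold quarters
  split_ifs <;> norm_num <;> linarith

lemma le_quarters {x : ℝ} (h : quarters x ≤ 1) : x ≤ (1 + quarters x) / 4 := by
  unfold quarters at *
  split_ifs at * <;> norm_num at * <;> linarith

lemma lt_of_quarters_eq_zero {x : ℝ} (h : quarters x = 0) : x < 1/4 := by
  unfold quarters at h
  split_ifs at h with h1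
  exact h1

/-- Each bin of the second packing contains a single item, so its other items have at most one
quarter in total, or two if the single item is in `(1/4, 1/2]`. -/
lemma sum_quarters_le (P : FFPair I s g f B O) (hZ : (singles I g).card = O.card)
    (hq : ∀ j ∈ singles I g, 1/4 < s j) :
    ∑ b ∈ commonBins I g B, ∑ i ∈ ffBin I g b, quarters (s i) ≤
      O.card + ((singles I g).filter (fun j => s j ≤ 1/2)).card := by
  have hsurj : ∀ o ∈ O, ∃ j ∈ singles I g, f j = o := by
    have himg : (singles I g).image f = O := by
      refine Finset.eq_of_subset_of_card_le ?_ ?_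
      · intro o ho
        obtain ⟨j, hj, rfl⟩ := Finset.mem_image.1 ho
        exact P.fO j (Finset.mem_filter.1 hj).1
      · rw [Finset.card_image_of_injOn fun i hi j hj h => P.single_f_inj hi hj h, hZ]
    intro o ho
    rw [← himg] at ho
    exact Finset.mem_image.1 ho
  set W : ι → ℕ := fun i => if i ∈ singles I g then 0 else quarters (s i) with hW
  set A : ι → ℕ := fun i => if i ∈ singles I g ∧ s i ≤ 1/2 then 1 else 0 with hA
  have key : ∀ o ∈ O, ∑ i ∈ I.filter (fun i => f i = o), W i ≤
      1 + ∑ i ∈ I.filter (fun i => f i = o), A i := by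
    intro o ho
    obtain ⟨j, hj, hjo⟩ := hsurj o ho
    have hopt := P.opt o ho
    set T := I.filter (fun i => f i = o) with hT
    have hjT : j ∈ T := Finset.mem_filter.2 ⟨(Finset.mem_filter.1 hj).1, hjo⟩
    have hAj : A j ≤ ∑ i ∈ T, A i := Finset.single_le_sum (fun _ _ => Nat.zero_le _) hjT
    refine le_trans ?_ (Nat.add_le_add_left hAj 1)
    rw [← Finset.add_sum_erase T s hjT] at hopt
    rw [← Finset.add_sum_erase T W hjT]
    have h1 : ((∑ i ∈ T.erase j, W i : ℕ) : ℝ) ≤ 4 * ∑ i ∈ T.erase j, s i := by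
      rw [Finset.mul_sum, Nat.cast_sum]
      refine Finset.sum_le_sum fun i hi => ?_
      have hp := P.pos i (Finset.mem_filter.1 (Finset.mem_of_mem_erase hi)).1
      simp only [hW]
      split_ifs
      · push_cast; linarith
      · exact quarters_le _ hp.le
    have h2 : W j = 0 := by simp [hW, hj]
    rw [h2, zero_add]
    have hqj := hq j hj
    by_cases hs : s j ≤ 1/2
    · have : A j = 1 := by simp only [hA]; rw [if_pos ⟨hj, hs⟩]
      rw [this]
      have h3 : ((∑ i ∈ T.erase j, W i : ℕ) : ℝ) < 3 := by linarith
      have h4 : ∑ i ∈ T.erase j, W i < 3 := by exact_mod_cast h3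
      omega
    · have h3 : ((∑ i ∈ T.erase j, W i : ℕ) : ℝ) < 2 := by linarith
      have h4 : ∑ i ∈ T.erase j, W i < 2 := by exact_mod_cast h3
      omega
  have hsum := Finset.sum_le_sum key
  rw [Finset.sum_fiberwise_of_maps_to P.fO W, P.sum_split W, Finset.sum_add_distrib,
    Finset.sum_fiberwise_of_maps_to P.fO A] at hsum
  have e1 : ∑ i ∈ I, A i = ((singles I g).filter (fun j => s j ≤ 1/2)).card := by
    simp only [hA]
    rw [← Finset.sum_filter, ← Finset.card_eq_sum_ones]
    congr 1
    ext i
    simp only [Finset.mem_filter]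
    exact ⟨fun h => h.2, fun h => ⟨(Finset.mem_filter.1 h.1).1, h⟩⟩
  have e2 : ∑ b ∈ commonBins I g B, ∑ i ∈ ffBin I g b, W i =
      ∑ b ∈ commonBins I g B, ∑ i ∈ ffBin I g b, quarters (s i) := by
    refine Finset.sum_congr rfl fun b hb => Finset.sum_congr rfl fun i hi => ?_
    have : i ∉ singles I g := by
      intro h
      have := (Finset.mem_filter.1 h).2
      rw [(mem_ffBin.1 hi).2] at this
      exact (Finset.mem_filter.1 hb).2 this
    simp [hW, this]
  rw [e1, e2] at hsum
  simp only [Finset.sum_const, smul_eq_mul, mul_one] at hsum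
  omega

/-- An exceptional bin, with at most `3` items and quarters together, has load below `3/4`. Hence no two
common bins are exceptional: the small item of the later one would fit in the earlier one. -/
lemma exceptional_bin (P : FFPair I s g f B O) {b : ℕ} (hb : b ∈ commonBins I g B)
    (h : (ffBin I g b).card + ∑ i ∈ ffBin I g b, quarters (s i) ≤ 3) :
    4 * ffLoad I s g b < (ffBin I g b).card + ∑ i ∈ ffBin I g b, quarters (s i) ∧
      ∃ i ∈ ffBin I g b, s i < 1/4 := by
  have h2 := P.two_le_card hb
  obtain ⟨i, hi, hi0⟩ : ∃ i ∈ ffBin I g b, quarters (s i) = 0 := by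
    by_contra! hne
    have : (ffBin I g b).card • 1 ≤ ∑ i ∈ ffBin I g b, quarters (s i) :=
      Finset.card_nsmul_le_sum _ _ _ fun i hi => Nat.one_le_iff_ne_zero.2 (hne i hi)
    rw [smul_eq_mul] at this
    omega
  have hlt := lt_of_quarters_eq_zero hi0
  refine ⟨?_, i, hi, hlt⟩
  have hsum : ∑ j ∈ ffBin I g b, 4 * s j < ∑ j ∈ ffBin I g b, (1 + (quarters (s j) : ℝ)) := by
    refine Finset.sum_lt_sum (fun j hj => ?_) ⟨i, hi, ?_⟩
    · have : quarters (s j) ≤ ∑ i ∈ ffBin I g b, quarters (s i) :=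
        Finset.single_le_sum (f := fun i => quarters (s i)) (fun _ _ => Nat.zero_le _) hj
      have := le_quarters (x := s j) (by omega)
      linarith
    · rw [hi0]; push_cast; linarith
  rw [← Finset.mul_sum, Finset.sum_add_distrib, Finset.sum_const, nsmul_eq_mul, mul_one] at hsum
  rw [Nat.cast_sum]
  exact hsum

lemma card_split (P : FFPair I s g f B O) :
    I.card = (singles I g).card + ∑ b ∈ commonBins I g B, (ffBin I g b).card := by
  simpa using P.sum_split (fun _ => (1 : ℕ))

/-- If every bin of the second packing has a single item, then most common bins have at least four
items, where an item may be traded for a quarter; there are only about `O.card` quarters. -/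
lemma many_items (P : FFPair I s g f B O) (hZ : (singles I g).card = O.card)
    (hN : 10 * B.card = 17 * O.card + 1) (h12 : 12 ≤ O.card) : 8 * O.card ≤ 3 * I.card := by
  -- with a single item of size at most `1/4`, all other loads would be at least `3/4`
  have hq : ∀ j ∈ singles I g, 1/4 < s j := by
    intro j hj
    by_contra! hlt
    have hjB := P.gB j (Finset.mem_filter.1 hj).1
    have hs := P.sum_load_le
    have h1 : (B.erase (g j)).card • (3/4 : ℝ) ≤ ∑ b ∈ B.erase (g j), ffLoad I s g b := by
      refine Finset.card_nsmul_le_sum _ _ _ fun b hb => ?_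
      obtain ⟨hne, hb⟩ := Finset.mem_erase.1 hb
      have := P.two_bins hb hjB hne
      rw [load_single hj] at this
      linarith
    have h2 := P.pos j (Finset.mem_filter.1 hj).1
    rw [← Finset.add_sum_erase _ _ hjB, load_single hj] at hs
    rw [nsmul_eq_mul] at h1
    have h3 : 3 * ((B.erase (g j)).card : ℝ) < 4 * O.card := by linarith
    have h4 : 3 * (B.erase (g j)).card < 4 * O.card := by exact_mod_cast h3
    have := Finset.card_erase_add_one hjB
    omega
  have hQ := P.sum_quarters_le hZ hq
  set A := (singles I g).filter (fun j => s j ≤ 1/2) with hA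
  have hA1 : A.card ≤ 1 := by
    refine Finset.card_le_one.2 fun i hi j hj => ?_
    obtain ⟨hi, hi'⟩ := Finset.mem_filter.1 hi
    obtain ⟨hj, hj'⟩ := Finset.mem_filter.1 hj
    by_contra hne
    linarith [P.single_add hi hj hne]
  set q : ℕ → ℕ := fun b => (ffBin I g b).card + ∑ i ∈ ffBin I g b, quarters (s i) with hqdef
  set E := (commonBins I g B).filter (fun b => q b ≤ 3) with hE
  have hE1 : E.card ≤ 1 := by
    have key : ∀ b ∈ E, ∀ b' ∈ E, ¬ b < b' := by
      intro b hb b' hb' hlt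
      obtain ⟨hb, hb3⟩ := Finset.mem_filter.1 hb
      obtain ⟨hb', hb3'⟩ := Finset.mem_filter.1 hb'
      obtain ⟨h1, -⟩ := P.exceptional_bin hb hb3
      obtain ⟨-, i, hi, h2⟩ := P.exceptional_bin hb' hb3'
      obtain ⟨hiI, rfl⟩ := mem_ffBin.1 hi
      have h3 := P.ff i hiI b (Finset.mem_filter.1 hb).1 hlt
      have h4 : (((ffBin I g b).card + ∑ i ∈ ffBin I g b, quarters (s i) : ℕ) : ℝ) ≤ 3 := by
        exact_mod_cast hb3
      push_cast at h1 h4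
      linarith
    refine Finset.card_le_one.2 fun b hb b' hb' => ?_
    have := key b hb b' hb'
    have := key b' hb' b hb
    omega
  have hmain : ∀ b ∈ commonBins I g B, 4 ≤ q b + if q b ≤ 3 then 2 - A.card else 0 := by
    intro b hb
    split_ifs with hb3
    · have h2 := P.two_le_card hb
      have hq2 : 2 ≤ q b := h2.trans (Nat.le_add_right _ _)
      rcases A.eq_empty_or_nonempty with h | ⟨j, hj⟩
      · rw [h, Finset.card_empty]; omega
      · obtain ⟨hj, hj2⟩ := Finset.mem_filter.1 hj
        have h1 := (P.exceptional_bin hb hb3).1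
        have h3 := P.single_add_common hj hb
        have h4 : (2 : ℝ) < (q b : ℕ) := by
          simp only [hqdef]
          push_cast at h1 ⊢
          linarith
        have h5 : 2 < q b := by exact_mod_cast h4
        omega
    · omega
  have hsum := Finset.sum_le_sum hmain
  rw [Finset.sum_add_distrib, ← Finset.sum_filter, Finset.sum_const, Finset.sum_const,
    smul_eq_mul, smul_eq_mul, ← hE] at hsum
  have h1 : E.card * (2 - A.card) ≤ 2 - A.card :=
    (Nat.mul_le_mul_right _ hE1).trans (by rw [one_mul])
  have h2 : ∑ b ∈ commonBins I g B, q b = ∑ b ∈ commonBins I g B, (ffBin I g b).card +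
      ∑ b ∈ commonBins I g B, ∑ i ∈ ffBin I g b, quarters (s i) := Finset.sum_add_distrib
  have h3 := P.card_split
  have h4 := P.card_bins
  omega

/-! ### The dichotomy for the number of First Fit bins -/

lemma two_mul_card_bins_le (P : FFPair I s g f B O) : 2 * B.card ≤ I.card + O.card := by
  have h1 := P.card_split
  have h2 := P.card_bins
  have h3 := P.card_singles_le
  have h4 : (commonBins I g B).card • 2 ≤ ∑ b ∈ commonBins I g B, (ffBin I g b).card :=
    Finset.card_nsmul_le_sum _ _ _ fun b hb => P.two_le_card hb
  rw [smul_eq_mul] at h4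
  omega

/-- The bound `1.7` on the number of bins fails by at most one tenth, and only for inputs with
many items. -/
theorem dichotomy (P : FFPair I s g f B O) :
    10 * B.card ≤ 17 * O.card ∨
      (10 * B.card = 17 * O.card + 1 ∧ 8 * O.card ≤ 3 * I.card) := by
  have hbins := P.card_bins
  have hsO := P.card_singles_le
  rcases (commonBins I g B).eq_empty_or_nonempty with hC | hC
  · rw [hC, Finset.card_empty] at hbins
    omega
  rcases (singles I g).eq_empty_or_nonempty with h1 | h1
  · exact Or.inl (P.bound_of_no_singles hC (by rw [h1, Finset.card_empty]))
  by_cases h3 : (∃ j ∈ singles I g, s j ≤ 1/2) → 3 ≤ (singles I g).card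
  swap
  · push Not at h3
    obtain ⟨⟨j, hj, hj2⟩, h3⟩ := h3
    exact Or.inl (P.bound_of_small_single hC hj hj2 (by omega))
  obtain ⟨y, v, hy0, hy, hv0, hv, hmain⟩ := P.weighted_bound hC h1 h3
  by_contra! hcon
  obtain ⟨hgt, hcon⟩ := hcon
  have hpos := Finset.card_pos.2 h1
  have hD : (0 : ℝ) ≤ (O.card : ℝ) - (singles I g).card := by
    have : ((singles I g).card : ℝ) ≤ O.card := by exact_mod_cast hsO
    linarith
  have hD' := mul_nonneg (show (0 : ℝ) ≤ 1 - 0.6 * y by linarith) hD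
  have hsmall : ∀ z n : ℕ, O.card = z → n ≤ B.card →
      (5 - 3 * y) * n < (8.5 - 6 * y) * z + 1 + 3 * y := by
    intro z n hz hn
    have : (n : ℝ) ≤ B.card := by exact_mod_cast hn
    rw [← hz]
    nlinarith
  have h4 : 4 ≤ O.card := by
    by_contra! hlt
    have : O.card = 1 ∨ O.card = 2 ∨ O.card = 3 := by omega
    rcases this with h | h | h
    · have := hsmall 1 2 h (by omega)
      push_cast at this
      linarith
    · have := hsmall 2 4 h (by omega)
      push_cast at this
      linarith
    · have := hsmall 3 6 h (by omega)
      push_cast at this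
      linarith
  have h4' : (4 : ℝ) ≤ O.card := by exact_mod_cast h4
  have heq : 10 * B.card = 17 * O.card + 1 := by
    by_contra hne
    have h5 : 17 * O.card + 2 ≤ 10 * B.card := by omega
    have h6 : 17 * (O.card : ℝ) + 2 ≤ 10 * B.card := by exact_mod_cast h5
    nlinarith [mul_nonneg hy0 (sub_nonneg.2 h4')]
  have heq' : 10 * (B.card : ℝ) = 17 * O.card + 1 := by exact_mod_cast heq
  have hall : (singles I g).card = O.card := by
    by_contra hne
    have h5 : (singles I g).card + 1 ≤ O.card := by omega
    have h6 : ((singles I g).card : ℝ) + 1 ≤ O.card := by exact_mod_cast h5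
    nlinarith [mul_nonneg hy0 (sub_nonneg.2 h4'),
      mul_nonneg (show (0 : ℝ) ≤ 1 - 0.6 * y by linarith) (sub_nonneg.2 h6)]
  have hfew := hcon heq
  rcases Nat.lt_or_ge O.card 12 with h12 | h12
  -- `10 * B.card = 17 * O.card + 1` forces `O.card % 10 = 7`
  · have h7 : O.card = 7 := by omega
    have h4b : ∃ b ∈ commonBins I g B, 4 ≤ (ffBin I g b).card := by
      by_contra! hno
      have hv' := hv (by omega) fun b hb => Nat.le_of_lt_succ (hno b hb)
      rw [hall, show (B.card : ℝ) = 12 by exact_mod_cast (by omega : B.card = 12), h7] at hmain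
      push_cast at hmain
      linarith
    obtain ⟨b, hb, hb4⟩ := h4b
    have h8 : ((commonBins I g B).erase b).card • 2 ≤
        ∑ b ∈ (commonBins I g B).erase b, (ffBin I g b).card :=
      Finset.card_nsmul_le_sum _ _ _ fun b hb => P.two_le_card (Finset.mem_of_mem_erase hb)
    have h9 := P.card_split
    rw [← Finset.add_sum_erase _ _ hb] at h9
    have h10 := Finset.card_erase_add_one hb
    rw [smul_eq_mul] at h8
    omega
  · have := P.many_items hall heq h12
    omega

end FFPair

end pair

/-! ### The First Fit run as a packing -/

/-- With default value `(0, 0)`, opening a new bin and using an old one are the same update. -/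
lemma ffUpdate_getD (k : ℕ) (x : ℝ) (st : List (ℕ × ℝ)) (b : ℕ) :
    (ffUpdate k x st).getD b (0, 0) = if b = ffFind k x st then
      ((st.getD b (0, 0)).1 + 1, (st.getD b (0, 0)).2 + x) else st.getD b (0, 0) := by
  induction st generalizing b with
  | nil => cases b <;> simp [ffUpdate, ffFind]
  | cons a st ih =>
    unfold ffUpdate ffFind
    by_cases h : a.1 < k ∧ a.2 + x ≤ 1
    · rw [if_pos h, if_pos h]
      cases b <;> simp
    · rw [if_neg h, if_neg h]
      cases b with
      | zero => simp
      | succ b => simpa using ih b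

lemma ffUpdate_length (k : ℕ) (x : ℝ) (st : List (ℕ × ℝ)) :
    (ffUpdate k x st).length = max st.length (ffFind k x st + 1) := by
  induction st with
  | nil => simp [ffUpdate, ffFind]
  | cons a st ih =>
    unfold ffUpdate ffFind
    by_cases h : a.1 < k ∧ a.2 + x ≤ 1
    · rw [if_pos h, if_pos h]
      simp
    · rw [if_neg h, if_neg h, List.length_cons, ih, List.length_cons]
      omega

lemma ffFind_le (k : ℕ) (x : ℝ) (st : List (ℕ × ℝ)) : ffFind k x st ≤ st.length := by
  induction st with
  | nil => simp [ffFind]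
  | cons a st ih =>
    unfold ffFind
    split_ifs
    · exact Nat.zero_le _
    · simpa using ih

lemma ffFind_card_lt {k : ℕ} (hk : 0 < k) (x : ℝ) (st : List (ℕ × ℝ)) :
    (st.getD (ffFind k x st) (0, 0)).1 < k := by
  induction st with
  | nil => simpa [ffFind] using hk
  | cons a st ih =>
    unfold ffFind
    split_ifs with h
    · simpa using h.1
    · simpa using ih

lemma ffFind_skip {k : ℕ} {x : ℝ} {st : List (ℕ × ℝ)} {b : ℕ} (hb : b < ffFind k x st) :
    k ≤ (st.getD b (0, 0)).1 ∨ 1 < (st.getD b (0, 0)).2 + x := by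
  induction st generalizing b with
  | nil => simp [ffFind] at hb
  | cons a st ih =>
    unfold ffFind at hb
    split_ifs at hb with h
    · exact absurd hb (Nat.not_lt_zero _)
    · cases b with
      | zero =>
        by_contra! hcon
        exact h (by simpa using hcon)
      | succ b => simpa using ih (by omega)

lemma ffBin_update (n p b : ℕ) (g : ℕ → ℕ) :
    ffBin (Finset.range (n + 1)) (Function.update g n p) b =
      if b = p then insert n (ffBin (Finset.range n) g b) else ffBin (Finset.range n) g b := by
  ext i
  by_cases hi : i = n
  · subst hi
    split_ifs with h
    · simp [ffBin, h]
    · simp [ffBin, Ne.symm h]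
  · have h1 : i < n + 1 ↔ i < n := by omega
    split_ifs with h <;> simp [ffBin, hi, h1]

/-- First Fit as an assignment `g` of items to bins: the recorded state is that of `g`, and an item
skips an earlier bin only if that bin finally has `k` items or finally has no room for it. -/
lemma exists_ffAssignment {k : ℕ} (hk : 0 < k) (L : List ℝ) (hL : ValidInput L) :
    ∃ g : ℕ → ℕ,
      (∀ b, (ffState k L).getD b (0, 0) = ((ffBin (Finset.range L.length) g b).card,
        ffLoad (Finset.range L.length) (fun i => L.getD i 0) g b)) ∧
      (∀ i < L.length, g i < FF k L) ∧
      (∀ b < FF k L, 0 < (ffBin (Finset.range L.length) g b).card) ∧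
      (∀ b, (ffBin (Finset.range L.length) g b).card ≤ k) ∧
      (∀ i < L.length, ∀ b < g i, (ffBin (Finset.range L.length) g b).card = k ∨
        1 < ffLoad (Finset.range L.length) (fun i => L.getD i 0) g b + L.getD i 0) := by
  induction L using List.reverseRecOn with
  | nil => exact ⟨fun _ => 0, by simp [ffState, ffBin, ffLoad, FF]⟩
  | append_singleton L x ih =>
    obtain ⟨g, h1, h2, h3, h4, h5⟩ := ih fun z hz => hL z (by simp [hz])
    have hx : 0 < x := (hL x (by simp)).1
    set n := L.length with hn
    set st := ffState k L with hst
    set p := ffFind k x st with hp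
    have hstate : ffState k (L ++ [x]) = ffUpdate k x st := by simp [ffState, hst]
    have hlen : (L ++ [x]).length = n + 1 := by simp [hn]
    have hFF : FF k (L ++ [x]) = max (FF k L) (p + 1) := by
      rw [FF, hstate, ffUpdate_length, FF]
    have hple : p ≤ FF k L := ffFind_le k x st
    have hs : ∀ i < n, (L ++ [x]).getD i 0 = L.getD i 0 := fun i hi => by
      rw [List.getD_append _ _ _ _ hi]
    have hsn : (L ++ [x]).getD n 0 = x := by simp [hn]
    have hload : ∀ b, ffLoad (Finset.range (n + 1)) (fun i => (L ++ [x]).getD i 0)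
        (Function.update g n p) b = if b = p then
          ffLoad (Finset.range n) (fun i => L.getD i 0) g b + x
        else ffLoad (Finset.range n) (fun i => L.getD i 0) g b := by
      intro b
      have e : ∑ i ∈ ffBin (Finset.range n) g b, (L ++ [x]).getD i 0 =
          ffLoad (Finset.range n) (fun i => L.getD i 0) g b :=
        Finset.sum_congr rfl fun i hi => hs i (by simpa using (mem_ffBin.1 hi).1)
      rw [ffLoad, ffBin_update]
      split_ifs
      · rw [Finset.sum_insert (by simp [ffBin]), e, hsn, add_comm]
      · exact e
    have hcard : ∀ b, (ffBin (Finset.range (n + 1)) (Function.update g n p) b).card =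
        if b = p then (ffBin (Finset.range n) g b).card + 1
        else (ffBin (Finset.range n) g b).card := by
      intro b
      rw [ffBin_update]
      split_ifs
      · rw [Finset.card_insert_of_notMem (by simp [ffBin])]
      · rfl
    have hpk : (ffBin (Finset.range n) g p).card < k := by
      have := ffFind_card_lt hk x st
      rwa [← hp, h1] at this
    rw [hlen, hstate, hFF]
    refine ⟨Function.update g n p, fun b => ?_, fun i hi => ?_, fun b hb => ?_, fun b => ?_,
      fun i hi b hb => ?_⟩
    · rw [ffUpdate_getD, hload, hcard, ← hp, h1]
      split_ifs <;> rfl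
    · rcases Nat.lt_succ_iff_lt_or_eq.1 hi with h | h
      · rw [Function.update_of_ne h.ne]
        exact lt_of_lt_of_le (h2 i h) (le_max_left _ _)
      · rw [h, Function.update_self]
        exact lt_of_lt_of_le (Nat.lt_succ_self p) (le_max_right _ _)
    · rw [hcard]
      split_ifs with h
      · exact Nat.succ_pos _
      · exact h3 b (by omega)
    · rw [hcard]
      split_ifs with h
      · rw [h]; exact hpk
      · exact h4 b
    · rw [hload, hcard]
      rcases Nat.lt_succ_iff_lt_or_eq.1 hi with h | h
      · rw [Function.update_of_ne h.ne] at hb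
        rw [hs i h]
        rcases h5 i h b hb with h6 | h6
        · left
          rw [if_neg]
          · exact h6
          · rintro rfl
            omega
        · right
          split_ifs <;> linarith
      · rw [h, Function.update_self] at hb
        have := ffFind_skip hb
        rw [h1] at this
        rw [h, hsn, if_neg hb.ne, if_neg hb.ne]
        rcases this with h6 | h6
        · exact Or.inl (le_antisymm (h4 b) h6)
        · exact Or.inr h6

lemma exists_optimal {k : ℕ} (hk : 0 < k) (L : List ℝ) (hL : ValidInput L) :
    ∃ f : Fin L.length → ℕ, IsFeasible k L f ∧ binsUsed L f = OPT k L := by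
  refine Nat.sInf_mem (s := {n | ∃ f : Fin L.length → ℕ, IsFeasible k L f ∧ binsUsed L f = n})
    ⟨_, fun i => i.1, fun b => ?_, rfl⟩
  have hsub : ∀ i ∈ Finset.univ.filter (fun i : Fin L.length => i.1 = b),
      ∀ j ∈ Finset.univ.filter (fun i : Fin L.length => i.1 = b), i = j := by
    intro i hi j hj
    simp only [Finset.mem_filter] at hi hj
    exact Fin.ext (hi.2.trans hj.2.symm)
  have hc := Finset.card_le_one.2 hsub
  refine ⟨hc.trans hk, ?_⟩
  refine (Finset.sum_le_card_nsmul _ _ 1 fun i _ => (hL _ (L.get_mem i)).2).trans ?_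
  rw [nsmul_eq_mul, mul_one]
  exact_mod_cast hc

/-- Here `K` bins have `k` items, and the other `N` bins have `n` items in total. In the second case
of the dichotomy, either `K ≤ Z - 1` or the number `n` of items suffices, depending on `k`. -/
lemma final_arith {k K N n Z : ℕ} (hk : 2 ≤ k) (h1 : k * K + n ≤ k * Z) (h2 : 2 * N ≤ n + Z)
    (h3 : 10 * N ≤ 17 * Z ∨ (10 * N = 17 * Z + 1 ∧ 8 * Z ≤ 3 * n)) :
    10 * k * (K + N) + 24 * Z ≤ 27 * k * Z := by
  rcases h3 with h3 | ⟨h3, h4⟩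
  · obtain ⟨j, rfl⟩ := Nat.exists_eq_add_of_le hk
    nlinarith [Nat.mul_le_mul_left j h3]
  · have h5 : 10 * k * N = 17 * k * Z + k := by
      calc 10 * k * N = k * (10 * N) := by ring
        _ = 17 * k * Z + k := by rw [h3]; ring
    have hn : 0 < n := by omega
    rcases Nat.lt_or_ge (3 * k) (8 * Z) with h6 | h6
    · nlinarith
    · have h7 : K < Z := by
        by_contra! hge
        have := Nat.mul_le_mul_left k hge
        omega
      have h8 := Nat.mul_le_mul_left k h7
      have h9 : k * (K + 1) = k * K + k := by ring
      nlinarith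

/-- For every k ≥ 2 and every input `L`, FF(L) ≤ (2.7 − 2.4/k)·OPT(L):
the absolute competitive ratio of First Fit is at most 2.7 − 2.4/k. -/
theorem ff_absolute_ub (k : ℕ) (hk : 2 ≤ k) (L : List ℝ) (hL : ValidInput L) :
    (FF k L : ℝ) ≤ ((2.7 : ℝ) - 2.4 / k) * (OPT k L : ℝ) := by
  have hk0 : 0 < k := by omega
  obtain ⟨g, -, hg, hne, -, hskip⟩ := exists_ffAssignment hk0 L hL
  obtain ⟨f₀, hf₀, hopt⟩ := exists_optimal hk0 L hL
  set s : ℕ → ℝ := fun i => L.getD i 0 with hs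
  set f : ℕ → ℕ := fun i => if h : i < L.length then f₀ ⟨i, h⟩ else 0 with hf
  set I₀ := Finset.range L.length with hI₀
  set B := (Finset.range (FF k L)).filter (fun b => (ffBin I₀ g b).card ≠ k) with hB
  set I := I₀.filter (fun i => (ffBin I₀ g (g i)).card ≠ k) with hI
  set O := Finset.univ.image f₀ with hO
  have hsi : ∀ i : Fin L.length, s i = L.get i := fun i => by simp [hs]
  have hpos : ∀ i ∈ I₀, 0 < s i := fun i hi => by
    have := hsi ⟨i, Finset.mem_range.1 hi⟩
    exact this ▸ (hL _ (L.get_mem _)).1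
  have hbin : ∀ b ∈ B, ffBin I g b = ffBin I₀ g b := by
    intro b hb
    ext i
    simp only [mem_ffBin, hI, Finset.mem_filter]
    constructor
    · exact fun h => ⟨h.1.1, h.2⟩
    · rintro ⟨h, rfl⟩
      exact ⟨⟨h, (Finset.mem_filter.1 hb).2⟩, rfl⟩
  have P : FFPair I s g f B O := by
    refine ⟨fun i hi => hpos i (Finset.mem_filter.1 hi).1, fun i hi => ?_, fun b hb => ?_,
      fun i hi b hb hlt => ?_, fun i hi => ?_, fun o _ => ?_⟩
    · obtain ⟨hi, hc⟩ := Finset.mem_filter.1 hi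
      exact Finset.mem_filter.2
        ⟨Finset.mem_range.2 (hg i (Finset.mem_range.1 hi)), hc⟩
    · rw [hbin b hb]
      exact Finset.card_pos.1 (hne b (Finset.mem_range.1 (Finset.mem_filter.1 hb).1))
    · rw [ffLoad, hbin b hb]
      exact (hskip i (Finset.mem_range.1 (Finset.mem_filter.1 hi).1) b hlt).resolve_left
        (Finset.mem_filter.1 hb).2
    · have hi := Finset.mem_range.1 (Finset.mem_filter.1 hi).1
      simp [hf, hi, hO]
    · refine le_trans ?_ (hf₀ o).2
      have e : ∑ i ∈ Finset.univ.filter (fun i => f₀ i = o), L.get i =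
          ∑ i ∈ I₀.filter (fun i => f i = o), s i := by
        rw [Finset.sum_filter, Finset.sum_filter, hI₀,
          Finset.sum_range (fun i => if f i = o then s i else 0)]
        refine Finset.sum_congr rfl fun i _ => ?_
        rw [hsi]
        simp [hf]
      rw [e]
      refine Finset.sum_le_sum_of_subset_of_nonneg ?_
        fun i hi _ => (hpos i (Finset.mem_filter.1 hi).1).le
      exact Finset.filter_subset_filter _ (Finset.filter_subset _ _)
  have hOZ : O.card = OPT k L := hopt
  have hnZ : L.length ≤ k * O.card := by
    have := Finset.card_le_mul_card_image (f := f₀) Finset.univ k fun b _ => (hf₀ b).1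
    simpa [hO] using this
  set Q := (Finset.range (FF k L)).filter (fun b => (ffBin I₀ g b).card = k) with hQ
  have hFF : FF k L = Q.card + B.card := by
    have := Finset.card_filter_add_card_filter_not (s := Finset.range (FF k L))
      (fun b => (ffBin I₀ g b).card = k)
    rw [Finset.card_range] at this
    exact this.symm
  have hcount : L.length = k * Q.card + I.card := by
    have h1 : I₀.card = ∑ b ∈ Finset.range (FF k L), (ffBin I₀ g b).card :=
      Finset.card_eq_sum_card_fiberwise fun i hi =>
        Finset.mem_coe.2 (Finset.mem_range.2 (hg i (Finset.mem_range.1 (Finset.mem_coe.1 hi))))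
    rw [← Finset.sum_filter_add_sum_filter_not _ (fun b => (ffBin I₀ g b).card = k)] at h1
    have h2 : ∑ b ∈ Q, (ffBin I₀ g b).card = k * Q.card := by
      rw [Finset.sum_congr rfl fun b hb => (Finset.mem_filter.1 hb).2, Finset.sum_const,
        smul_eq_mul, mul_comm]
    have h3 : ∑ b ∈ B, (ffBin I₀ g b).card = I.card := by
      rw [P.card_eq]
      exact Finset.sum_congr rfl fun b hb => by rw [hbin b hb]
    rw [hI₀, Finset.card_range, ← hI₀] at h1
    rw [← h2, ← h3]
    exact h1
  have key := final_arith (K := Q.card) (Z := O.card) hk (by omega) P.two_mul_card_bins_le P.dichotomy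
  rw [← hFF, hOZ] at key
  have key' : 10 * (k : ℝ) * FF k L + 24 * OPT k L ≤ 27 * k * OPT k L := by exact_mod_cast key
  have hkR : (0 : ℝ) < k := by exact_mod_cast hk0
  have e : ((2.7 : ℝ) - 2.4 / k) * OPT k L = (2.7 * k * OPT k L - 2.4 * OPT k L) / k := by
    field_simp
  rw [e, le_div_iff₀ hkR]
  linarith
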